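/- Every no-signaling (2,2,2) box satisfies B_CHSH ≥ 3 + 2·B_H, where B_CHSH = Σ_{(a,b,x,y) : a⊕b = x·y} P(a,b|x,y) is the CHSH expression (sum over all quadruples with a ⊕ b = x·y). -/

import Mathlib

/-!
No-signaling makes the one-party marginals independent of the other party's setting, so a
normalized box is determined by the four numbers `P(0,0|x,y)` and the marginals of outcome `0`.
In these coordinates the Hardy expression is exactly the Clauser–Horne expression, and the CHSH
expression is `3` plus twice it: the inequality is in fact an equality.
-/

section Box

variable {R : Type*}

/-- The no-signaling condition on a bipartite box `P(a,b|x,y)`, written `P a b x y`: the marginal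
of each party does not depend on the setting of the other one. -/
structure IsNoSignaling {α β X Y : Type*} [Fintype α] [Fintype β] [AddCommMonoid R]
    (P : α → β → X → Y → R) : Prop where
  alice : ∀ a x y y', ∑ b, P a b x y = ∑ b, P a b x y'
  bob : ∀ b y x x', ∑ a, P a b x y = ∑ a, P a b x' y

/-- The probability that the two outcomes of a box with binary outcomes agree, given the settings
`x` and `y`. -/
def agreementProb {X Y : Type*} [Add R] (P : Fin 2 → Fin 2 → X → Y → R) (x : X) (y : Y) : R :=
  P 0 0 x y + P 1 1 x y

/-- The probability that the two outcomes of a box with binary outcomes differ, given the settings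
`x` and `y`. -/
def disagreementProb {X Y : Type*} [Add R] (P : Fin 2 → Fin 2 → X → Y → R) (x : X) (y : Y) : R :=
  P 0 1 x y + P 1 0 x y

/-- The CHSH expression `B_CHSH`; arithmetic in `Fin 2` is modulo `2`, so `a + b` is `a ⊕ b`. -/
def chshValue [AddCommMonoid R] (P : Fin 2 → Fin 2 → Fin 2 → Fin 2 → R) : R :=
  ∑ a : Fin 2, ∑ b : Fin 2, ∑ x : Fin 2, ∑ y : Fin 2, if a + b = x * y then P a b x y else 0

/-- The Hardy expression `B_H = p_H - z_H`. -/
def hardyValue [AddCommGroup R] (P : Fin 2 → Fin 2 → Fin 2 → Fin 2 → R) : R :=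
  P 0 0 0 0 - (P 0 1 0 1 + P 1 0 1 0 + P 0 0 1 1)

/-- The Clauser–Horne expression. The marginals of outcome `0` at setting `0` are read off at
setting `0` of the other party, a choice that is immaterial for no-signaling boxes. -/
def clauserHorneValue [AddCommGroup R] (P : Fin 2 → Fin 2 → Fin 2 → Fin 2 → R) : R :=
  P 0 0 0 0 + P 0 0 0 1 + P 0 0 1 0 - P 0 0 1 1 - ∑ b, P 0 b 0 0 - ∑ a, P a 0 0 0

section Settings

variable {X Y : Type*} (P : Fin 2 → Fin 2 → X → Y → R)

theorem disagreementProb_eq_marginals [CommRing R] (x : X) (y : Y) :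
    disagreementProb P x y = ∑ b, P 0 b x y + ∑ a, P a 0 x y - 2 * P 0 0 x y := by
  simp only [disagreementProb, Fin.sum_univ_two]
  ring

theorem agreementProb_add_disagreementProb [AddCommMonoid R] (x : X) (y : Y) :
    agreementProb P x y + disagreementProb P x y = ∑ a, ∑ b, P a b x y := by
  simp only [agreementProb, disagreementProb, Fin.sum_univ_two]
  abel

variable {P}

theorem agreementProb_eq_one_sub [AddCommGroupWithOne R] {x : X} {y : Y}
    (hnorm : ∑ a, ∑ b, P a b x y = 1) :
    agreementProb P x y = 1 - disagreementProb P x y :=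
  eq_sub_of_add_eq ((agreementProb_add_disagreementProb P x y).trans hnorm)

end Settings

variable {P : Fin 2 → Fin 2 → Fin 2 → Fin 2 → R}

theorem chshValue_eq_agreementProb_add_disagreementProb [AddCommMonoid R] :
    chshValue P = agreementProb P 0 0 + agreementProb P 0 1 + agreementProb P 1 0 +
      disagreementProb P 1 1 := by
  have one_add_one : (1 : Fin 2) + 1 = 0 := rfl
  simp only [chshValue, agreementProb, disagreementProb, Fin.sum_univ_two, one_add_one, add_zero,
    zero_add, mul_zero, mul_one, one_ne_zero, zero_ne_one, if_true, if_false]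
  abel

theorem chshValue_eq_three_sub_disagreementProb [CommRing R]
    (hnorm : ∀ x y, ∑ a, ∑ b, P a b x y = 1) :
    chshValue P = 3 - disagreementProb P 0 0 - disagreementProb P 0 1 - disagreementProb P 1 0 +
      disagreementProb P 1 1 := by
  rw [chshValue_eq_agreementProb_add_disagreementProb, agreementProb_eq_one_sub (hnorm 0 0),
    agreementProb_eq_one_sub (hnorm 0 1), agreementProb_eq_one_sub (hnorm 1 0)]
  ring

namespace IsNoSignaling

theorem chshValue_eq_clauserHorneValue [CommRing R] (hP : IsNoSignaling P)
    (hnorm : ∀ x y, ∑ a, ∑ b, P a b x y = 1) :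
    chshValue P = 3 + 2 * clauserHorneValue P := by
  rw [chshValue_eq_three_sub_disagreementProb hnorm]
  simp only [disagreementProb_eq_marginals, clauserHorneValue]
  -- The marginals at setting `1` cancel between the settings `(0,1)`, `(1,0)` and `(1,1)`.
  rw [hP.alice 0 0 1 0, hP.alice 0 1 1 0, hP.bob 0 0 1 0, hP.bob 0 1 1 0]
  ring

theorem hardyValue_eq_clauserHorneValue [AddCommGroup R] (hP : IsNoSignaling P) :
    hardyValue P = clauserHorneValue P := by
  have alice_zero : P 0 1 0 1 = ∑ b, P 0 b 0 0 - P 0 0 0 1 := by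
    rw [hP.alice 0 0 0 1, Fin.sum_univ_two, add_sub_cancel_left]
  have bob_zero : P 1 0 1 0 = ∑ a, P a 0 0 0 - P 0 0 1 0 := by
    rw [hP.bob 0 0 0 1, Fin.sum_univ_two, add_sub_cancel_left]
  rw [hardyValue, clauserHorneValue, alice_zero, bob_zero]
  abel

end IsNoSignaling

theorem chsh_ge_hardy_general [CommRing R] (hP : IsNoSignaling P)
    (hnorm : ∀ x y, ∑ a, ∑ b, P a b x y = 1) :
    chshValue P = 3 + 2 * hardyValue P := by
  rw [hP.chshValue_eq_clauserHorneValue hnorm, hP.hardyValue_eq_clauserHorneValue]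

end Box

/-- Every no-signaling (2,2,2) box satisfies `B_CHSH ≥ 3 + 2·B_H`, where
`B_CHSH` is the sum of `P(a,b|x,y)` over all quadruples with `a ⊕ b = x·y`. -/
theorem chsh_ge_hardy (P : Fin 2 → Fin 2 → Fin 2 → Fin 2 → ℝ)
    (hpos : ∀ a b x y, 0 ≤ P a b x y)
    (hnorm : ∀ x y, ∑ a, ∑ b, P a b x y = 1)
    (hnsA : ∀ a x y y', ∑ b, P a b x y = ∑ b, P a b x y')
    (hnsB : ∀ b y x x', ∑ a, P a b x y = ∑ a, P a b x' y) :
    3 + 2 * (P 0 0 0 0 - (P 0 1 0 1 + P 1 0 1 0 + P 0 0 1 1)) ≤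
      ∑ a : Fin 2, ∑ b : Fin 2, ∑ x : Fin 2, ∑ y : Fin 2,
        if a + b = x * y then P a b x y else 0 :=
  (chsh_ge_hardy_general ⟨hnsA, hnsB⟩ hnorm).ge
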